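/- For every even integer n ≥ 2, the frame F*_n, with distinguished world w_1, satisfies conditions (Φ1)–(Φ4). -/

import Mathlib

/-- The accessibility relation of the frame `F_m`:
worlds are `w_1, …, w_m` (encoded as `Sum.inl i` for `i : Fin m`, `w_{i+1} = Sum.inl i`)
together with `w*` (encoded as `Sum.inr ()`); `w_i R w_{i+1}` for `1 ≤ i < m` and `w_1 R w*`. -/
def Frel (m : ℕ) : (Fin m ⊕ Unit) → (Fin m ⊕ Unit) → Prop
  | Sum.inl i, Sum.inl j => (j : ℕ) = (i : ℕ) + 1
  | Sum.inl i, Sum.inr _ => (i : ℕ) = 0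
  | Sum.inr _, _ => False

/-- The set of worlds of the frame `F*_n`: the worlds of `F_n` together with, for each even
`i` with `2 ≤ i ≤ n`, a new world `w*_i` (encoded as `Sum.inr ⟨j, _⟩` with `j = i - 1` odd). -/
def FSW (n : ℕ) : Type := (Fin n ⊕ Unit) ⊕ {j : Fin n // Odd (j : ℕ)}

/-- The accessibility relation of the frame `F*_n`: that of `F_n` together with the
single additional pair `w*_i R w_i` for each even `i` with `2 ≤ i ≤ n`. -/
def FSrel (n : ℕ) : FSW n → FSW n → Prop
  | Sum.inl a, Sum.inl b => Frel n a b
  | Sum.inr j, Sum.inl (Sum.inl i) => i = j.1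
  | _, _ => False

/-- Condition (Φ1): `R` is irreflexive and there are no `x, y, z` with
`x R y`, `y R z` and `x R z`. -/
def Phi1 {W : Type*} (R : W → W → Prop) : Prop :=
  (∀ x, ¬ R x x) ∧ (∀ x y z, R x y → R y z → ¬ R x z)

/-- Condition (Φ2) at the distinguished world `w₁`. -/
def Phi2 {W : Type*} (R : W → W → Prop) (w₁ : W) : Prop :=
  ∃ ws w₂ w₂s : W,
    (∀ x, R w₁ x ↔ (x = ws ∨ x = w₂)) ∧ ws ≠ w₂ ∧
    R w₂s w₂ ∧ (¬ ∃ x, R x w₁) ∧ (¬ ∃ x, R x w₂s) ∧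
    (∀ x, R x ws → x = w₁) ∧ (¬ ∃ x, R ws x) ∧ w₁ ≠ w₂s

/-- Condition (Φ3) at the distinguished world `w₁`: every world other than `w₁` has at most
one `R`-successor, and no world has three pairwise distinct `R`-predecessors. -/
def Phi3 {W : Type*} (R : W → W → Prop) (w₁ : W) : Prop :=
  (∀ x, x ≠ w₁ → ∀ y z, R x y → R x z → y = z) ∧
  (∀ w, ¬ ∃ x y z, x ≠ y ∧ y ≠ z ∧ x ≠ z ∧ R x w ∧ R y w ∧ R z w)

/-- Condition (Φ4). -/
def Phi4 {W : Type*} (R : W → W → Prop) : Prop :=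
  ∀ w, (∃ y z, y ≠ z ∧ R y w ∧ R z w) →
    ((¬ ∃ x, R w x) ∨
      ∃ x y z, R w y ∧ R y x ∧ R z x ∧ y ≠ z ∧ x ≠ w ∧
        (∀ u, R u y → u = w) ∧ ¬ ∃ u, R u z)

theorem stmt12 (n : ℕ) (hn : 2 ≤ n) (hneven : Even n) :
    Phi1 (FSrel n) ∧
    Phi2 (FSrel n) (Sum.inl (Sum.inl (⟨0, by omega⟩ : Fin n))) ∧
    Phi3 (FSrel n) (Sum.inl (Sum.inl (⟨0, by omega⟩ : Fin n))) ∧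
    Phi4 (FSrel n) := by
  refine ⟨⟨?_, ?_⟩, ?_, ⟨?_, ?_⟩, ?_⟩
  · rintro ((i | i) | i) h <;> simp [FSrel, Frel] at h
  · rintro ((⟨i, hi⟩ | i) | ⟨⟨i, hi⟩, hi'⟩) ((⟨j, hj⟩ | j) | ⟨⟨j, hj⟩, hj'⟩)
      ((⟨k, hk⟩ | k) | ⟨⟨k, hk⟩, hk'⟩) h1 h2 h3 <;>
      simp [FSrel, Frel] at h1 h2 h3 <;> omega
  · refine ⟨Sum.inl (Sum.inr ()), Sum.inl (Sum.inl ⟨1, by omega⟩),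
      Sum.inr ⟨⟨1, by omega⟩, odd_one⟩, ?_, ?_, ?_, ?_, ?_, ?_, ?_, ?_⟩
    · rintro ((⟨i, hi⟩ | i) | ⟨⟨i, hi⟩, hi'⟩)
      · refine ⟨fun h => Or.inr ?_, fun h => ?_⟩
        · simp [FSrel, Frel] at h
          subst h; rfl
        · rcases h with h | h
          · cases h
          · cases h; simp [FSrel, Frel]
      · exact ⟨fun _ => Or.inl rfl, fun _ => rfl⟩
      · refine ⟨fun h => h.elim, fun h => ?_⟩
        rcases h with h | h <;> cases h
    · intro h; cases h
    · rfl
    · rintro ⟨(⟨i, hi⟩ | i) | ⟨⟨i, hi⟩, hi'⟩, h⟩ <;> simp [FSrel, Frel] at h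
      subst h; simp at hi'
    · rintro ⟨(⟨i, hi⟩ | i) | ⟨⟨i, hi⟩, hi'⟩, h⟩ <;> exact h
    · rintro ((⟨i, hi⟩ | i) | ⟨⟨i, hi⟩, hi'⟩) h <;> simp [FSrel, Frel] at h
      subst h; rfl
    · rintro ⟨(⟨i, hi⟩ | i) | ⟨⟨i, hi⟩, hi'⟩, h⟩ <;> exact h
    · intro h; cases h
  · rintro ((⟨i, hi⟩ | i) | ⟨⟨i, hi⟩, hi'⟩) hne ((⟨j, hj⟩ | j) | ⟨⟨j, hj⟩, hj'⟩)
      ((⟨k, hk⟩ | k) | ⟨⟨k, hk⟩, hk'⟩) h2 h3 <;>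
      simp [FSrel, Frel] at h2 h3 <;>
      first
        | rfl
        | (subst h2; subst h3; rfl)
        | (subst h2; exact absurd rfl hne)
        | (subst h3; exact absurd rfl hne)
  · rintro ((⟨w, hw⟩ | w) | ⟨⟨w, hw⟩, hw'⟩) ⟨(⟨i, hi⟩ | i) | ⟨⟨i, hi⟩, hi'⟩,
      (⟨j, hj⟩ | j) | ⟨⟨j, hj⟩, hj'⟩, (⟨k, hk⟩ | k) | ⟨⟨k, hk⟩, hk'⟩, n1, n2, n3, h1, h2, h3⟩ <;>
      simp [FSrel, Frel] at h1 h2 h3 <;>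
      first
        | (obtain rfl : i = j := by omega
           exact n1 rfl)
        | (obtain rfl : j = k := by omega
           exact n2 rfl)
        | (obtain rfl : i = k := by omega
           exact n3 rfl)
  · rintro ((⟨w, hw⟩ | w) | ⟨⟨w, hw⟩, hw'⟩) ⟨y, z, hyz, hy, hz⟩
    · have hodd : Odd w := by
        by_contra hc
        rcases y with (⟨i, hi⟩ | i) | ⟨⟨i, hi⟩, hi'⟩ <;>
          rcases z with (⟨j, hj⟩ | j) | ⟨⟨j, hj⟩, hj'⟩ <;>
          simp [FSrel, Frel] at hy hz <;>
          first
            | (subst hy; exact hc hi')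
            | (subst hz; exact hc hj')
            | (obtain rfl : i = j := by omega
               exact hyz rfl)
      by_cases hlt : w + 1 < n
      · right
        have hlt2 : w + 2 < n := by
          obtain ⟨a, ha⟩ := hneven
          obtain ⟨b, hb⟩ := hodd
          omega
        have hodd2 : Odd (w + 2) := by
          obtain ⟨b, hb⟩ := hodd
          exact ⟨b + 1, by omega⟩
        refine ⟨Sum.inl (Sum.inl ⟨w + 2, hlt2⟩), Sum.inl (Sum.inl ⟨w + 1, hlt⟩),
          Sum.inr ⟨⟨w + 2, hlt2⟩, hodd2⟩, ?_, ?_, ?_, ?_, ?_, ?_, ?_⟩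
        · simp [FSrel, Frel]
        · simp [FSrel, Frel]
        · rfl
        · intro h; cases h
        · intro h
          have h := Fin.val_eq_of_eq (Sum.inl.inj (Sum.inl.inj h))
          simp at h
        · rintro ((⟨i, hi⟩ | i) | ⟨⟨i, hi⟩, hi'⟩) h <;> simp [FSrel, Frel] at h
          · subst h; rfl
          · exfalso
            obtain ⟨a, ha⟩ := hi'
            obtain ⟨b, hb⟩ := hodd
            simp at ha
            omega
        · rintro ⟨(⟨i, hi⟩ | i) | ⟨⟨i, hi⟩, hi'⟩, h⟩ <;> exact h
      · left
        rintro ⟨(⟨i, hi⟩ | i) | ⟨⟨i, hi⟩, hi'⟩, h⟩ <;> simp [FSrel, Frel] at h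
        · omega
        · subst h; simp at hodd
    · left
      rintro ⟨(⟨i, hi⟩ | i) | ⟨⟨i, hi⟩, hi'⟩, h⟩ <;> exact h
    · exfalso
      rcases y with (⟨i, hi⟩ | i) | ⟨⟨i, hi⟩, hi'⟩ <;> exact hy
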